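/- Let H²_β be the weighted Hardy space induced by a weight sequence w = (w_k)_{k≥1} with w_k → 1, let φ_{z₀}(z) = (z₀ − z)/(1 − conj(z₀)z) for z₀ ∈ 𝔻, and write 𝔉 = {φ_{z₀}^n}_{n≥0}. Then the following are equivalent: (1) C_{φ_{z₀}} is a bounded operator on H²_β; (2) C_{φ_{z₀}} is a bounded invertible operator on H²_β; (3) the sequence (φ_{z₀}^n/β_n)_{n≥0} is a Riesz basis of H²_β; (4) the sequence (β_n · φ_{z₀}^n)_{n≥0} is a Riesz basis of H²_{β⁻¹}; (5) C_{φ_{z₀}} is a bounded invertible operator on H²_{β⁻¹}; (6) C_{φ_{z₀}} is a bounded operator on H²_{β⁻¹}. -/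

import Mathlib

/-!
The map `φ = φ_{z₀}` is an involution of the disk, so a bounded `C_φ` is its own inverse. Since
`C_φ` sends the normalized monomials `z ^ n / β n`, an orthonormal basis of `H²_β`, to
`φ ^ n / β n`, its bounded invertibility means exactly that the latter form a Riesz basis.

To pass from `β` to `β⁻¹`, read the reproducing kernel of `H²_β` at `u`, a vector of the common `ℓ²`
model, as an element of `H²_{β⁻¹}`: it is the Cauchy kernel `1 / (1 - conj u * z)`. The adjoint of
`C_φ` on `H²_β` sends the kernel at `u` to the kernel at `φ u`, and the identity
`1 - conj (φ v) * φ z =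
  (1 - |z₀| ^ 2) * (1 - conj v * z) / (conj (1 - conj z₀ * v) * (1 - conj z₀ * z))`
at `v = φ u` shows that the bounded operator `(1 - |z₀| ^ 2)⁻¹ N M^* C_φ^*` acts on these kernels
as composition with `φ` in `H²_{β⁻¹}`. Here `M` and `N` are multiplication by `1 - conj z₀ * z` on
`H²_β` and on `H²_{β⁻¹}`. As the kernels span a dense subspace and point evaluations are
continuous, this operator is composition with `φ` on all of `H²_{β⁻¹}`.
-/

noncomputable section

open Complex Filter Topology

/-- The sequence-space (ℓ²) model of a weighted Hardy space `H²_β`.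
An element `a : H2` represents the analytic function whose `k`-th Taylor
coefficient is `a k / β k` (so that `‖a‖` is exactly the `H²_β`-norm). -/
abbrev H2 : Type := lp (fun _ : ℕ => ℂ) 2

/-- The direct sum (ℓ²-sense) of `m` copies of `H2`. -/
abbrev Hm (m : ℕ) : Type := PiLp 2 (fun _ : Fin m => H2)

/-- The open unit disk 𝔻 ⊆ ℂ. -/
def unitDisk : Set ℂ := Metric.ball 0 1

/-- `β_0 = 1` and `β_k = ∏_{j=1}^k w_j`. -/
def betaSeq (w : ℕ → ℝ) (k : ℕ) : ℝ := ∏ j ∈ Finset.Icc 1 k, w j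

/-- The analytic function on 𝔻 represented by the vector `a` in the model of `H²_β`:
`f(z) = ∑_k (a k / β k) z^k`. -/
def repFun (β : ℕ → ℝ) (a : H2) (z : ℂ) : ℂ := ∑' k, (a k / (β k : ℂ)) * z ^ k

/-- `T` is (the ℓ²-model of) the multiplication operator `M_g` on `H²_β`.
Existence of such a `T` says precisely that `M_g` is bounded on `H²_β`. -/
def RepMul (β : ℕ → ℝ) (g : ℂ → ℂ) (T : H2 →L[ℂ] H2) : Prop :=
  ∀ a : H2, ∀ z ∈ unitDisk, repFun β (T a) z = g z * repFun β a z

/-- `T` is (the ℓ²-model of) the composition operator `C_ψ` on `H²_β`.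
Existence of such a `T` says precisely that `C_ψ` is bounded on `H²_β`. -/
def RepComp (β : ℕ → ℝ) (ψ : ℂ → ℂ) (T : H2 →L[ℂ] H2) : Prop :=
  ∀ a : H2, ∀ z ∈ unitDisk, repFun β (T a) z = repFun β a (ψ z)

/-- The Möbius factor `φ_{z₀}(z) = (z₀ - z)/(1 - conj z₀ · z)`. -/
def mobius (z₀ z : ℂ) : ℂ := (z₀ - z) / (1 - (starRingEnd ℂ) z₀ * z)

/-- `φ` belongs to `Aut(𝔻)`, i.e. `φ(z) = e^{iθ}(z₀ - z)/(1 - conj z₀ · z)`. -/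
def IsDiskAut (φ : ℂ → ℂ) : Prop :=
  ∃ (θ : ℝ) (z₀ : ℂ), z₀ ∈ unitDisk ∧
    ∀ z, φ z = Complex.exp (θ * Complex.I) * mobius z₀ z

/-- `B` is a finite Blaschke product of order `m`. -/
def IsBlaschke (m : ℕ) (B : ℂ → ℂ) : Prop :=
  ∃ (θ : ℝ) (zs : Fin m → ℂ), (∀ j, zs j ∈ unitDisk) ∧
    ∀ z, B z = Complex.exp (θ * Complex.I) * ∏ j, mobius (zs j) z

/-- `w` is a positive weight sequence tending to `1` such that the weighted Hardy
space `H²_β` is of polynomial growth: `sup_k (k+1)|w_k - 1| < ∞`. -/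
def PolyGrowth (w : ℕ → ℝ) : Prop :=
  (∀ k, 1 ≤ k → 0 < w k) ∧ Tendsto w atTop (nhds 1) ∧
    ∃ M : ℝ, ∀ k : ℕ, 1 ≤ k → ((k : ℝ) + 1) * |w k - 1| ≤ M

/-- `f` is analytic on an open neighbourhood of the closed unit disk. -/
def AnalyticOnClosedDisk (f : ℂ → ℂ) : Prop :=
  ∃ U : Set ℂ, IsOpen U ∧ Metric.closedBall (0:ℂ) 1 ⊆ U ∧ AnalyticOnNhd ℂ f U

/-- A family in `H2` is a Riesz basis if some bounded invertible operator maps it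
to an orthonormal basis. -/
def RieszBasis {ι : Type} (x : ι → H2) : Prop :=
  ∃ V : H2 ≃L[ℂ] H2, Orthonormal ℂ (fun i => V (x i)) ∧
    (Submodule.span ℂ (Set.range fun i => V (x i))).topologicalClosure = ⊤

open scoped ComplexConjugate

/-- The standard Hilbert basis of the model; in `H²_β` its `n`-th vector is the normalized
monomial `z ^ n / β n`. -/
def stdBasis : HilbertBasis ℕ ℂ H2 :=
  .ofRepr (.refl ℂ H2)

lemma stdBasis_apply (n : ℕ) : stdBasis n = lp.single 2 n (1 : ℂ) :=
  (stdBasis.repr_symm_single n).symm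

lemma rieszBasis_iff_exists_map_stdBasis {x : ℕ → H2} :
    RieszBasis x ↔ ∃ X : H2 ≃L[ℂ] H2, ∀ n, X (stdBasis n) = x n := by
  constructor
  · rintro ⟨V, hV, hspan⟩
    let b := HilbertBasis.mk hV hspan.ge
    refine ⟨b.repr.symm.toContinuousLinearEquiv.trans V.symm, fun n ↦ ?_⟩
    simp [stdBasis_apply, b]
  · rintro ⟨X, hX⟩
    have hX' : (fun n ↦ X.symm (x n)) = stdBasis := by
      ext1 n
      rw [← hX, X.symm_apply_apply]
    exact ⟨X.symm, hX' ▸ stdBasis.orthonormal, hX' ▸ stdBasis.dense_span⟩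

lemma repFun_stdBasis (β : ℕ → ℝ) (n : ℕ) (z : ℂ) :
    repFun β (stdBasis n) z = z ^ n / β n := by
  rw [repFun, tsum_eq_single n fun k hk ↦ by simp [stdBasis_apply, hk]]
  simp [stdBasis_apply, inv_mul_eq_div]

lemma repFun_smul (β : ℕ → ℝ) (c : ℂ) (a : H2) (z : ℂ) :
    repFun β (c • a) z = c * repFun β a z := by
  simp only [repFun, ← tsum_mul_left, lp.coeFn_smul, Pi.smul_apply, smul_eq_mul, mul_div_assoc,
    mul_assoc]

lemma mem_unitDisk {z : ℂ} : z ∈ unitDisk ↔ ‖z‖ < 1 :=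
  mem_ball_zero_iff

lemma norm_conj_mul_lt_one {a z : ℂ} (ha : a ∈ unitDisk) (hz : z ∈ unitDisk) :
    ‖conj a * z‖ < 1 := by
  rw [norm_mul, RCLike.norm_conj]
  exact mul_lt_one_of_nonneg_of_lt_one_left (norm_nonneg _) (mem_unitDisk.1 ha)
    (mem_unitDisk.1 hz).le

/-- Weights `β` for which `H²_β` is a reproducing kernel Hilbert space of functions on the disk:
the coefficients `conj z ^ k / β k` of the kernel at each `z ∈ 𝔻` are square summable. The weights
need not be positive; only `|β k|` matters for the norm. -/
structure IsHardyWeight (β : ℕ → ℝ) : Prop where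
  ne_zero : ∀ k, β k ≠ 0
  memℓp_kernel : ∀ z ∈ unitDisk, Memℓp (fun k ↦ conj z ^ k / (β k : ℂ)) 2

/-- Weights `β` for which, moreover, multiplication by `z` is bounded on `H²_β`. -/
structure IsShiftHardyWeight (β : ℕ → ℝ) : Prop extends IsHardyWeight β where
  bddAbove_ratio : BddAbove (Set.range fun k ↦ |β (k + 1) / β k|)

section Weights

variable {β w : ℕ → ℝ}

lemma IsHardyWeight.of_tendsto_ratio (hβ : ∀ k, β k ≠ 0)
    (hlim : Tendsto (fun k ↦ |β (k + 1) / β k|) atTop (𝓝 1)) : IsHardyWeight β where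
  ne_zero := hβ
  memℓp_kernel z hz := by
    let p := FormalMultilinearSeries.ofScalars ℂ fun k ↦ (β k : ℂ)⁻¹
    have hp : p.radius = (1 : NNReal) := by
      refine FormalMultilinearSeries.ofScalars_radius_eq_of_tendsto ℂ _ one_ne_zero ?_
      simpa [abs_div, div_eq_mul_inv, mul_comm] using hlim
    have hz' : conj z ∈ Metric.eball (0 : ℂ) p.radius := by
      rw [hp, Metric.eball_coe]
      simpa [mem_unitDisk] using hz
    have hsum := p.summable_norm_apply hz'
    refine (memℓp_gen (p := 1) ?_).of_exponent_ge one_le_two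
    simpa [p, div_eq_mul_inv, mul_comm] using hsum

lemma IsShiftHardyWeight.of_tendsto_ratio (hβ : ∀ k, β k ≠ 0)
    (hlim : Tendsto (fun k ↦ |β (k + 1) / β k|) atTop (𝓝 1)) : IsShiftHardyWeight β :=
  { IsHardyWeight.of_tendsto_ratio hβ hlim with bddAbove_ratio := hlim.bddAbove_range }

lemma betaSeq_ne_zero (hw : ∀ k, 1 ≤ k → w k ≠ 0) (k : ℕ) : betaSeq w k ≠ 0 :=
  Finset.prod_ne_zero_iff.2 fun j hj ↦ hw j (Finset.mem_Icc.1 hj).1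

lemma betaSeq_succ (w : ℕ → ℝ) (k : ℕ) : betaSeq w (k + 1) = betaSeq w k * w (k + 1) :=
  Finset.prod_Icc_succ_top (by lia) w

lemma betaSeq_inv (w : ℕ → ℝ) : betaSeq w⁻¹ = (betaSeq w)⁻¹ := by
  ext k
  exact Finset.prod_inv_distrib w

lemma isShiftHardyWeight_betaSeq (hw : ∀ k, 1 ≤ k → w k ≠ 0) (hlim : Tendsto w atTop (𝓝 1)) :
    IsShiftHardyWeight (betaSeq w) := by
  refine .of_tendsto_ratio (betaSeq_ne_zero hw) ?_
  have hlim' : Tendsto (fun k ↦ |w (k + 1)|) atTop (𝓝 1) := by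
    simpa using ((tendsto_add_atTop_iff_nat 1).2 hlim).abs
  refine hlim'.congr fun k ↦ ?_
  rw [betaSeq_succ, mul_div_cancel_left₀ _ (betaSeq_ne_zero hw k)]

lemma isShiftHardyWeight_inv_betaSeq (hw : ∀ k, 1 ≤ k → w k ≠ 0) (hlim : Tendsto w atTop (𝓝 1)) :
    IsShiftHardyWeight (betaSeq w)⁻¹ := by
  have hlim' : Tendsto w⁻¹ atTop (𝓝 1) := by
    have h := hlim.inv₀ one_ne_zero
    rwa [inv_one] at h
  exact betaSeq_inv w ▸ isShiftHardyWeight_betaSeq (fun k hk ↦ inv_ne_zero (hw k hk)) hlim'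

end Weights

section Kernel

variable {β : ℕ → ℝ}

/-- The reproducing kernel of `H²_β` at `z`, as a vector of the model. -/
def IsHardyWeight.kernel (hβ : IsHardyWeight β) (z : unitDisk) : H2 :=
  ⟨_, hβ.memℓp_kernel z z.2⟩

lemma IsHardyWeight.hasSum_repFun (hβ : IsHardyWeight β) (a : H2) (z : unitDisk) :
    HasSum (fun k ↦ a k / (β k : ℂ) * (z : ℂ) ^ k) (inner ℂ (hβ.kernel z) a) := by
  refine (lp.hasSum_inner (hβ.kernel z) a).congr_fun fun k ↦ ?_
  simp [IsHardyWeight.kernel, div_mul_eq_mul_div, mul_div_assoc]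

lemma IsHardyWeight.repFun_eq_inner_kernel (hβ : IsHardyWeight β) (a : H2) (z : unitDisk) :
    repFun β a z = inner ℂ (hβ.kernel z) a :=
  (hβ.hasSum_repFun a z).tsum_eq

lemma IsHardyWeight.hasFPowerSeriesAt_repFun (hβ : IsHardyWeight β) (a : H2) :
    HasFPowerSeriesAt (repFun β a)
      (FormalMultilinearSeries.ofScalars ℂ fun k ↦ a k / (β k : ℂ)) 0 := by
  rw [hasFPowerSeriesAt_iff]
  filter_upwards [Metric.ball_mem_nhds (0 : ℂ) one_pos] with z hz
  have hsum := hβ.hasSum_repFun a ⟨z, hz⟩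
  rw [← hβ.repFun_eq_inner_kernel] at hsum
  simpa [mul_comm] using hsum

lemma IsHardyWeight.eq_of_eqOn_repFun (hβ : IsHardyWeight β) {a b : H2}
    (hab : Set.EqOn (repFun β a) (repFun β b) unitDisk) : a = b := by
  have hseries := (hβ.hasFPowerSeriesAt_repFun a).eq_formalMultilinearSeries_of_eventually
    (hβ.hasFPowerSeriesAt_repFun b) (hab.eventuallyEq_of_mem (Metric.ball_mem_nhds 0 one_pos))
  ext k
  have hcoeff := congrArg (FormalMultilinearSeries.coeff · k) hseries
  simp only [FormalMultilinearSeries.coeff_ofScalars] at hcoeff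
  exact (div_left_inj' (Complex.ofReal_ne_zero.2 (hβ.ne_zero k))).1 hcoeff

lemma IsHardyWeight.dense_span_kernel (hβ : IsHardyWeight β) :
    Dense (Submodule.span ℂ (Set.range hβ.kernel) : Set H2) := by
  rw [Submodule.dense_iff_topologicalClosure_eq_top, Submodule.topologicalClosure_eq_top_iff,
    Submodule.eq_bot_iff]
  intro a ha
  refine hβ.eq_of_eqOn_repFun fun z hz ↦ ?_
  rw [hβ.repFun_eq_inner_kernel a ⟨z, hz⟩, hβ.repFun_eq_inner_kernel 0 ⟨z, hz⟩, inner_zero_right]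
  exact (Submodule.mem_orthogonal _ _).1 ha _ (Submodule.subset_span ⟨_, rfl⟩)

lemma dense_span_stdBasis : Dense (Submodule.span ℂ (Set.range stdBasis) : Set H2) :=
  Submodule.dense_iff_topologicalClosure_eq_top.2 stdBasis.dense_span

lemma IsHardyWeight.repFun_inv_kernel (hβ : IsHardyWeight β) (u : unitDisk) {z : ℂ}
    (hz : z ∈ unitDisk) : repFun β⁻¹ (hβ.kernel u) z = (1 - conj (u : ℂ) * z)⁻¹ := by
  rw [← tsum_geometric_of_norm_lt_one (norm_conj_mul_lt_one u.2 hz), repFun]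
  refine tsum_congr fun k ↦ ?_
  simp [IsHardyWeight.kernel, hβ.ne_zero k, mul_pow]

lemma IsHardyWeight.repFun_map_eq_of_dense (hβ : IsHardyWeight β) {s : Set H2}
    (hs : Dense (Submodule.span ℂ s : Set H2)) {T : H2 →L[ℂ] H2} {c : ℂ} {z v : unitDisk}
    (hT : ∀ a ∈ s, repFun β (T a) z = c * repFun β a v) (a : H2) :
    repFun β (T a) z = c * repFun β a v := by
  have hext : innerSL ℂ (hβ.kernel z) ∘L T = c • innerSL ℂ (hβ.kernel v) :=
    ContinuousLinearMap.ext_on hs fun a ha ↦ by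
      simpa [hβ.repFun_eq_inner_kernel] using hT a ha
  simpa [hβ.repFun_eq_inner_kernel] using congrArg (· a) hext

lemma IsHardyWeight.adjoint_kernel (hβ : IsHardyWeight β) {T : H2 →L[ℂ] H2} {c : ℂ}
    {z v : unitDisk} (hT : ∀ a, repFun β (T a) z = c * repFun β a v) :
    T.adjoint (hβ.kernel z) = conj c • hβ.kernel v := by
  refine ext_inner_right ℂ fun a ↦ ?_
  rw [ContinuousLinearMap.adjoint_inner_left, inner_smul_left, Complex.conj_conj,
    ← hβ.repFun_eq_inner_kernel, ← hβ.repFun_eq_inner_kernel, hT a]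

end Kernel

section Multiplication

variable {β : ℕ → ℝ}

lemma exists_weightedShift {c : ℕ → ℂ} {C : ℝ} (hc : ∀ k, ‖c k‖ ≤ C) :
    ∃ S : H2 →L[ℂ] H2, ∀ n, S (stdBasis n) = c n • stdBasis (n + 1) := by
  have hV := (stdBasis.orthonormal.comp Nat.succ Nat.succ_injective).orthogonalFamily
  let D : H2 →L[ℂ] H2 := lp.mapCLM 2 (fun k ↦ c k • ContinuousLinearMap.id ℂ ℂ)
    ((norm_nonneg _).trans (hc 0)) fun k ↦ by simpa [norm_smul] using hc k
  have hD (n : ℕ) : D (stdBasis n) = lp.single 2 n (c n) := by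
    ext k
    by_cases hk : k = n <;> simp [D, stdBasis_apply, hk]
  refine ⟨hV.linearIsometry.toContinuousLinearMap ∘L D, fun n ↦ ?_⟩
  simp [hD]

lemma IsShiftHardyWeight.exists_repMul_id (hβ : IsShiftHardyWeight β) :
    ∃ S : H2 →L[ℂ] H2, RepMul β id S := by
  obtain ⟨C, hC⟩ := hβ.bddAbove_ratio
  obtain ⟨S, hS⟩ := exists_weightedShift (c := fun k ↦ ((β (k + 1) / β k : ℝ) : ℂ)) (C := C)
    fun k ↦ by simpa [abs_div] using hC ⟨k, rfl⟩
  refine ⟨S, fun a z hz ↦ hβ.repFun_map_eq_of_dense (z := ⟨z, hz⟩) (v := ⟨z, hz⟩)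
    dense_span_stdBasis ?_ a⟩
  rintro _ ⟨n, rfl⟩
  have hn : (β (n + 1) : ℂ) ≠ 0 := Complex.ofReal_ne_zero.2 (hβ.ne_zero _)
  rw [hS, repFun_smul, repFun_stdBasis, repFun_stdBasis]
  push_cast
  field_simp
  simp [pow_succ']

lemma RepMul.one_sub_smul (hβ : IsHardyWeight β) {g : ℂ → ℂ} {S : H2 →L[ℂ] H2}
    (hS : RepMul β g S) (c : ℂ) : RepMul β (fun z ↦ 1 - c * g z) (1 - c • S) := by
  intro a z hz
  have hSz := hS a z hz
  lift z to unitDisk using hz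
  rw [hβ.repFun_eq_inner_kernel, hβ.repFun_eq_inner_kernel] at hSz ⊢
  simp only [sub_apply, one_apply_eq_self, smul_apply, inner_sub_right, inner_smul_right, hSz]
  ring

end Multiplication

section Composition

variable {β : ℕ → ℝ} {ψ : ℂ → ℂ}

lemma RepComp.of_dense (hβ : IsHardyWeight β) (hψ : Set.MapsTo ψ unitDisk unitDisk) {s : Set H2}
    (hs : Dense (Submodule.span ℂ s : Set H2)) {T : H2 →L[ℂ] H2}
    (hT : ∀ a ∈ s, ∀ z ∈ unitDisk, repFun β (T a) z = repFun β a (ψ z)) : RepComp β ψ T := by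
  intro a z hz
  have hTz := hβ.repFun_map_eq_of_dense (T := T) (c := 1) (z := ⟨z, hz⟩) (v := ⟨ψ z, hψ hz⟩) hs
  simp only [one_mul] at hTz
  exact hTz (fun a ha ↦ hT a ha z hz) a

lemma repComp_iff_forall_stdBasis (hβ : IsHardyWeight β) (hψ : Set.MapsTo ψ unitDisk unitDisk)
    {T : H2 →L[ℂ] H2} :
    RepComp β ψ T ↔ ∀ n, ∀ z ∈ unitDisk, repFun β (T (stdBasis n)) z = ψ z ^ n / β n := by
  simp only [← repFun_stdBasis]
  refine ⟨fun hT n ↦ hT (stdBasis n), fun hT ↦ .of_dense hβ hψ dense_span_stdBasis ?_⟩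
  rintro _ ⟨n, rfl⟩
  exact hT n

lemma exists_rieszBasis_iff_exists_repComp (hβ : IsHardyWeight β)
    (hψ : Set.MapsTo ψ unitDisk unitDisk) :
    (∃ x : ℕ → H2, (∀ n, ∀ z ∈ unitDisk, repFun β (x n) z = ψ z ^ n / β n) ∧ RieszBasis x) ↔
      ∃ X : H2 ≃L[ℂ] H2, RepComp β ψ X := by
  simp only [rieszBasis_iff_exists_map_stdBasis, repComp_iff_forall_stdBasis hβ hψ]
  constructor
  · rintro ⟨x, hx, X, hX⟩
    exact ⟨X, fun n ↦ by simpa [hX] using hx n⟩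
  · rintro ⟨X, hX⟩
    exact ⟨fun n ↦ X (stdBasis n), hX, X, fun _ ↦ rfl⟩

lemma exists_equiv_repComp_iff_of_involutive (hβ : IsHardyWeight β)
    (hψ : Set.MapsTo ψ unitDisk unitDisk) (hinv : Set.LeftInvOn ψ ψ unitDisk) :
    (∃ X : H2 ≃L[ℂ] H2, RepComp β ψ X) ↔ ∃ T : H2 →L[ℂ] H2, RepComp β ψ T := by
  refine ⟨fun ⟨X, hX⟩ ↦ ⟨X, hX⟩, fun ⟨T, hT⟩ ↦ ?_⟩
  have hTT (a : H2) : T (T a) = a := hβ.eq_of_eqOn_repFun fun z hz ↦ by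
    rw [hT _ z hz, hT _ _ (hψ hz), hinv hz]
  exact ⟨.equivOfInverse T T hTT hTT, hT⟩

end Composition

section Mobius

variable {a v z : ℂ}

lemma one_sub_conj_mul_ne_zero (ha : a ∈ unitDisk) (hz : z ∈ unitDisk) : 1 - conj a * z ≠ 0 := by
  have hlt := norm_conj_mul_lt_one ha hz
  exact sub_ne_zero.2 fun h ↦ by simp [← h] at hlt

lemma one_sub_conj_mobius_mul_mobius (hv : 1 - conj a * v ≠ 0) (hz : 1 - conj a * z ≠ 0) :
    1 - conj (mobius a v) * mobius a z =
      (1 - conj a * a) * (1 - conj v * z) / (conj (1 - conj a * v) * (1 - conj a * z)) := by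
  have hv' : conj (1 - conj a * v) ≠ 0 := (map_ne_zero _).2 hv
  rw [mobius, mobius, map_div₀, div_mul_div_comm, one_sub_div (mul_ne_zero hv' hz)]
  simp only [map_sub, map_mul, map_one, Complex.conj_conj]
  ring

lemma mapsTo_mobius (ha : a ∈ unitDisk) : Set.MapsTo (mobius a) unitDisk unitDisk := by
  intro z hz
  have hne := one_sub_conj_mul_ne_zero ha hz
  have hnorm : 1 - ‖mobius a z‖ ^ 2 = (1 - ‖a‖ ^ 2) * (1 - ‖z‖ ^ 2) / ‖1 - conj a * z‖ ^ 2 := by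
    have h := one_sub_conj_mobius_mul_mobius hne hne
    simp only [Complex.conj_mul'] at h
    exact_mod_cast h
  rw [mem_unitDisk] at ha hz ⊢
  have hpos : 0 < 1 - ‖mobius a z‖ ^ 2 := by
    rw [hnorm]
    have := norm_pos_iff.2 hne
    have := sub_pos.2 (pow_lt_one₀ (norm_nonneg a) ha two_ne_zero)
    have := sub_pos.2 (pow_lt_one₀ (norm_nonneg z) hz two_ne_zero)
    positivity
  exact (sq_lt_one_iff₀ (norm_nonneg _)).1 (sub_pos.1 hpos)

lemma leftInvOn_mobius (ha : a ∈ unitDisk) : Set.LeftInvOn (mobius a) (mobius a) unitDisk := by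
  intro z hz
  have hz' := one_sub_conj_mul_ne_zero ha hz
  have hφz := one_sub_conj_mul_ne_zero ha (mapsTo_mobius ha hz)
  have hmul : mobius a z * (1 - conj a * z) = a - z := div_mul_cancel₀ _ hz'
  rw [mobius, div_eq_iff hφz]
  refine mul_right_cancel₀ hz' ?_
  linear_combination (-1 + z * conj a) * hmul

end Mobius

section Duality

variable {β : ℕ → ℝ} {z₀ : ℂ}

lemma exists_repComp_mobius_inv (hβ : IsShiftHardyWeight β) (hβ' : IsShiftHardyWeight β⁻¹)
    (hz₀ : z₀ ∈ unitDisk) {T : H2 →L[ℂ] H2} (hT : RepComp β (mobius z₀) T) :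
    ∃ R : H2 →L[ℂ] H2, RepComp β⁻¹ (mobius z₀) R := by
  obtain ⟨S, hS⟩ := hβ.exists_repMul_id
  obtain ⟨S', hS'⟩ := hβ'.exists_repMul_id
  let M := 1 - conj z₀ • S
  let N := 1 - conj z₀ • S'
  have hM : RepMul β (fun z ↦ 1 - conj z₀ * z) M := hS.one_sub_smul hβ.toIsHardyWeight _
  have hN : RepMul β⁻¹ (fun z ↦ 1 - conj z₀ * z) N := hS'.one_sub_smul hβ'.toIsHardyWeight _
  refine ⟨(1 - conj z₀ * z₀)⁻¹ • N ∘L M.adjoint ∘L T.adjoint,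
    .of_dense hβ'.toIsHardyWeight (mapsTo_mobius hz₀) hβ.dense_span_kernel ?_⟩
  rintro _ ⟨u, rfl⟩ z hz
  let φu : unitDisk := ⟨mobius z₀ u, mapsTo_mobius hz₀ u.2⟩
  have hTu : T.adjoint (hβ.kernel u) = hβ.kernel φu := by
    simpa using hβ.adjoint_kernel (c := 1) (v := φu) fun a ↦ by simpa using hT a u u.2
  have hMu : M.adjoint (hβ.kernel φu) = conj (1 - conj z₀ * φu) • hβ.kernel φu :=
    hβ.adjoint_kernel fun a ↦ hM a φu φu.2
  have hkernel : 1 - conj (u : ℂ) * mobius z₀ z =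
      (1 - conj z₀ * z₀) * (1 - conj (φu : ℂ) * z) /
        (conj (1 - conj z₀ * φu) * (1 - conj z₀ * z)) := by
    rw [← one_sub_conj_mobius_mul_mobius (one_sub_conj_mul_ne_zero hz₀ φu.2)
      (one_sub_conj_mul_ne_zero hz₀ hz), leftInvOn_mobius hz₀ u.2]
  calc repFun β⁻¹ (((1 - conj z₀ * z₀)⁻¹ • N ∘L M.adjoint ∘L T.adjoint) (hβ.kernel u)) z
      = (1 - conj z₀ * z₀)⁻¹ * (conj (1 - conj z₀ * φu) *
          ((1 - conj z₀ * z) * (1 - conj (φu : ℂ) * z)⁻¹)) := by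
        simp only [smul_apply, ContinuousLinearMap.comp_apply, hTu, hMu,
          map_smul, repFun_smul, hN _ z hz, hβ.repFun_inv_kernel φu hz]
    _ = (1 - conj (u : ℂ) * mobius z₀ z)⁻¹ := by
        rw [hkernel, inv_div, div_eq_mul_inv, mul_inv]
        ring
    _ = repFun β⁻¹ (hβ.kernel u) (mobius z₀ z) :=
        (hβ.repFun_inv_kernel u (mapsTo_mobius hz₀ hz)).symm

lemma exists_repComp_mobius_inv_iff (hβ : IsShiftHardyWeight β) (hβ' : IsShiftHardyWeight β⁻¹)
    (hz₀ : z₀ ∈ unitDisk) :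
    (∃ T : H2 →L[ℂ] H2, RepComp β (mobius z₀) T) ↔
      ∃ T : H2 →L[ℂ] H2, RepComp β⁻¹ (mobius z₀) T := by
  refine ⟨fun ⟨_, hT⟩ ↦ exists_repComp_mobius_inv hβ hβ' hz₀ hT, fun ⟨_, hT⟩ ↦ ?_⟩
  simpa using exists_repComp_mobius_inv hβ' (by simpa using hβ) hz₀ hT

end Duality

theorem statement11_general {β : ℕ → ℝ} (hβ : IsShiftHardyWeight β)
    (hβ' : IsShiftHardyWeight β⁻¹) {z₀ : ℂ} (hz₀ : z₀ ∈ unitDisk) :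
    List.TFAE
      [ (∃ T : H2 →L[ℂ] H2, RepComp β (mobius z₀) T),
        (∃ X : H2 ≃L[ℂ] H2, RepComp β (mobius z₀) (X : H2 →L[ℂ] H2)),
        (∃ x : ℕ → H2,
          (∀ n : ℕ, ∀ z ∈ unitDisk, repFun β (x n) z = mobius z₀ z ^ n / (β n : ℂ)) ∧
          RieszBasis x),
        (∃ x : ℕ → H2,
          (∀ n : ℕ, ∀ z ∈ unitDisk, repFun β⁻¹ (x n) z = (β n : ℂ) * mobius z₀ z ^ n) ∧
          RieszBasis x),
        (∃ X : H2 ≃L[ℂ] H2, RepComp β⁻¹ (mobius z₀) (X : H2 →L[ℂ] H2)),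
        (∃ T : H2 →L[ℂ] H2, RepComp β⁻¹ (mobius z₀) T) ] := by
  have hφ := mapsTo_mobius hz₀
  have hinv := leftInvOn_mobius hz₀
  tfae_have 2 ↔ 1 := exists_equiv_repComp_iff_of_involutive hβ.toIsHardyWeight hφ hinv
  tfae_have 3 ↔ 2 := exists_rieszBasis_iff_exists_repComp hβ.toIsHardyWeight hφ
  tfae_have 4 ↔ 5 := by
    simpa [mul_comm] using exists_rieszBasis_iff_exists_repComp hβ'.toIsHardyWeight hφ
  tfae_have 5 ↔ 6 := exists_equiv_repComp_iff_of_involutive hβ'.toIsHardyWeight hφ hinv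
  tfae_have 1 ↔ 6 := exists_repComp_mobius_inv_iff hβ hβ' hz₀
  tfae_finish

/-- Let `H²_β` come from a weight sequence `w_k → 1` and let
`φ_{z₀}` be a Möbius transformation, `z₀ ∈ 𝔻`.  The following are equivalent:
(1) `C_{φ_{z₀}}` is bounded on `H²_β`; (2) `C_{φ_{z₀}}` is bounded invertible on
`H²_β`; (3) `(φ_{z₀}^n/β_n)` is a Riesz basis of `H²_β`; (4) `(β_n φ_{z₀}^n)` is a
Riesz basis of `H²_{β⁻¹}`; (5) `C_{φ_{z₀}}` is bounded invertible on `H²_{β⁻¹}`;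
(6) `C_{φ_{z₀}}` is bounded on `H²_{β⁻¹}`. -/
theorem statement11 (w : ℕ → ℝ) (hpos : ∀ k, 1 ≤ k → 0 < w k)
    (hlim : Tendsto w atTop (nhds 1))
    (z₀ : ℂ) (hz₀ : z₀ ∈ unitDisk) :
    List.TFAE
      [ (∃ T : H2 →L[ℂ] H2, RepComp (betaSeq w) (mobius z₀) T),
        (∃ X : H2 ≃L[ℂ] H2, RepComp (betaSeq w) (mobius z₀) (X : H2 →L[ℂ] H2)),
        (∃ x : ℕ → H2,
          (∀ n : ℕ, ∀ z ∈ unitDisk,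
            repFun (betaSeq w) (x n) z = mobius z₀ z ^ n / (betaSeq w n : ℂ)) ∧
          RieszBasis x),
        (∃ x : ℕ → H2,
          (∀ n : ℕ, ∀ z ∈ unitDisk,
            repFun (fun k => (betaSeq w k)⁻¹) (x n) z = (betaSeq w n : ℂ) * mobius z₀ z ^ n) ∧
          RieszBasis x),
        (∃ X : H2 ≃L[ℂ] H2, RepComp (fun k => (betaSeq w k)⁻¹) (mobius z₀) (X : H2 →L[ℂ] H2)),
        (∃ T : H2 →L[ℂ] H2, RepComp (fun k => (betaSeq w k)⁻¹) (mobius z₀) T) ] := by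
  have hw : ∀ k, 1 ≤ k → w k ≠ 0 := fun k hk ↦ (hpos k hk).ne'
  exact statement11_general (isShiftHardyWeight_betaSeq hw hlim)
    (isShiftHardyWeight_inv_betaSeq hw hlim) hz₀
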